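/- arXiv:2602.05996 — 2 statements merged into one kernel-verified Lean document; each statement's English description precedes it below -/
import Mathlib

section
/- Let N, d, L be positive integers. Let A_1, …, A_L ∈ ℝ^{N×N} satisfy A_lᵀA_l = I_N and let W_1, …, W_L ∈ ℝ^{d×d} satisfy W_lW_lᵀ = I_d. Given X_0 ∈ ℝ^{N×d}, define X_l = A_l X_{l−1} W_l for l = 1, …, L, and set A = A_L ⋯ A_1. Then the kernel matrix Σ_L = X_L X_Lᵀ satisfies Σ_L = A Σ_0 Aᵀ where Σ_0 = X_0 X_0ᵀ; consequently rank(Σ_L) = rank(Σ_0) and the characteristic polynomials of Σ_L and Σ_0 coincide (so Σ_L and Σ_0 have the same eigenvalues). -/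
open Matrix

/-- **Kernel preservation in a skipless OSA-only Transformer** (Theorem 2).
If each attention matrix `A l` is orthogonal and each value-output weight `W l` satisfies
`W l * (W l)ᵀ = 1`, and `X l = A l * X (l-1) * W l`, then with `Aprod = A L * ⋯ * A 1`
the kernel matrix satisfies `Σ_L = Aprod Σ_0 Aprodᵀ`; consequently the rank and the
characteristic polynomial (hence the eigenvalues) of the kernel matrix are preserved. -/
theorem osa_kernel_preservation
    (N d L : ℕ) (hN : 0 < N) (hd : 0 < d) (hL : 0 < L)
    (A : ℕ → Matrix (Fin N) (Fin N) ℝ) (W : ℕ → Matrix (Fin d) (Fin d) ℝ)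
    (hA : ∀ l, 1 ≤ l → l ≤ L → (A l)ᵀ * A l = 1)
    (hW : ∀ l, 1 ≤ l → l ≤ L → W l * (W l)ᵀ = 1)
    (X : ℕ → Matrix (Fin N) (Fin d) ℝ)
    (hX : ∀ l, 1 ≤ l → l ≤ L → X l = A l * X (l - 1) * W l)
    (Aprod : Matrix (Fin N) (Fin N) ℝ)
    (hAprod : Aprod = ((List.range L).map (fun i => A (L - i))).prod) :
    X L * (X L)ᵀ = Aprod * (X 0 * (X 0)ᵀ) * Aprodᵀ ∧
    (X L * (X L)ᵀ).rank = (X 0 * (X 0)ᵀ).rank ∧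
    (X L * (X L)ᵀ).charpoly = (X 0 * (X 0)ᵀ).charpoly := by
  have key : ∀ k, k ≤ L →
      X k * (X k)ᵀ = ((List.range k).map (fun i => A (k - i))).prod * (X 0 * (X 0)ᵀ) *
        (((List.range k).map (fun i => A (k - i))).prod)ᵀ ∧
      (((List.range k).map (fun i => A (k - i))).prod)ᵀ *
        ((List.range k).map (fun i => A (k - i))).prod = 1 := by
    intro k
    induction k with
    | zero => intro _; simp
    | succ k ih =>
      intro hk
      obtain ⟨h1, h2⟩ := ih (by omega)
      have hP : ((List.range (k + 1)).map (fun i => A (k + 1 - i))).prod =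
          A (k + 1) * ((List.range k).map (fun i => A (k - i))).prod := by
        rw [List.range_succ_eq_map]
        simp [Function.comp_def]
      rw [hP]
      generalize ((List.range k).map (fun i => A (k - i))).prod = P at h1 h2
      have hx : X (k + 1) = A (k + 1) * X k * W (k + 1) := hX (k + 1) (by omega) hk
      have hw := hW (k + 1) (by omega) hk
      have ha := hA (k + 1) (by omega) hk
      constructor
      · calc X (k + 1) * (X (k + 1))ᵀ
            = A (k + 1) * X k * (W (k + 1) * (W (k + 1))ᵀ) * ((X k)ᵀ * (A (k + 1))ᵀ) := by
              rw [hx]; simp only [Matrix.transpose_mul, Matrix.mul_assoc]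
          _ = A (k + 1) * (X k * (X k)ᵀ) * (A (k + 1))ᵀ := by
              rw [hw, Matrix.mul_one]; simp only [Matrix.mul_assoc]
          _ = _ := by
              rw [h1]; simp only [Matrix.transpose_mul, Matrix.mul_assoc]
      · calc (A (k + 1) * P)ᵀ * (A (k + 1) * P)
            = Pᵀ * ((A (k + 1))ᵀ * A (k + 1)) * P := by
              simp only [Matrix.transpose_mul, Matrix.mul_assoc]
          _ = 1 := by rw [ha, Matrix.mul_one, h2]
  obtain ⟨h1, h2⟩ := key L le_rfl
  rw [← hAprod] at h1 h2
  have h3 : Aprod * Aprodᵀ = 1 := mul_eq_one_comm.mp h2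
  refine ⟨h1, ?_, ?_⟩
  · rw [h1, Matrix.rank_mul_eq_left_of_isUnit_det, Matrix.rank_mul_eq_right_of_isUnit_det]
    · exact Matrix.isUnit_det_of_left_inverse h2
    · exact Matrix.isUnit_det_of_left_inverse h3
  · rw [h1, Matrix.charpoly_mul_comm, ← Matrix.mul_assoc, h2, Matrix.one_mul]
end

section
/- Fix x₀ ∈ (0, √3) and define the sequence x_{k+1} = x_k(3 − x_k²)/2. Then x_k → 1 as k → ∞. -/
/-- **Scalar Newton–Schulz convergence.** For `x₀ ∈ (0, √3)`, the iteration
`x_{k+1} = x_k (3 - x_k²)/2` converges to `1`. -/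
theorem newton_schulz_scalar_tendsto_one
    (x₀ : ℝ) (hx₀ : 0 < x₀) (hx₀' : x₀ < Real.sqrt 3)
    (x : ℕ → ℝ) (hx0 : x 0 = x₀)
    (hx : ∀ k, x (k + 1) = x k * (3 - (x k) ^ 2) / 2) :
    Filter.Tendsto x Filter.atTop (nhds 1) := by
  have hsq : x 0 ^ 2 < 3 := by
    rw [hx0]
    exact (Real.lt_sqrt hx₀.le).mp hx₀'
  have h0 : 0 < x 0 := hx0 ▸ hx₀
  have hle : ∀ y : ℝ, 0 < y → y * (3 - y ^ 2) / 2 ≤ 1 := by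
    intro y hy
    have h : 0 ≤ (y - 1) ^ 2 * (y + 2) := by positivity
    nlinarith [h]
  have hb : ∀ k, 0 < x (k + 1) ∧ x (k + 1) ≤ 1 := by
    intro k
    induction k with
    | zero =>
      rw [hx 0]
      exact ⟨by have := mul_pos h0 (sub_pos.mpr hsq); linarith, hle _ h0⟩
    | succ k ih =>
      obtain ⟨h1, h2⟩ := ih
      rw [hx (k + 1)]
      have h3 : 0 < 3 - x (k + 1) ^ 2 := by nlinarith
      exact ⟨by have := mul_pos h1 h3; linarith, hle _ h1⟩
  have hmono : Monotone (fun k => x (k + 1)) := by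
    apply monotone_nat_of_le_succ
    intro k
    obtain ⟨h1, h2⟩ := hb k
    have h3 : 0 ≤ 1 - x (k + 1) ^ 2 := by nlinarith
    have h4 := mul_nonneg h1.le h3
    have h5 := hx (k + 1)
    show x (k + 1) ≤ x (k + 1 + 1)
    linarith
  have hbdd : BddAbove (Set.range (fun k => x (k + 1))) := by
    refine ⟨1, ?_⟩
    rintro _ ⟨k, rfl⟩
    exact (hb k).2
  have hlim := tendsto_atTop_ciSup hmono hbdd
  generalize hL : (⨆ k, x (k + 1)) = L at hlim
  have hLpos : 0 < L := lt_of_lt_of_le (hb 0).1 (hmono.ge_of_tendsto hlim 0)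
  have h1 : Filter.Tendsto (fun k => x (k + 1 + 1)) Filter.atTop (nhds L) :=
    hlim.comp (Filter.tendsto_add_atTop_nat 1)
  have h2 : Filter.Tendsto (fun k => x (k + 1 + 1)) Filter.atTop
      (nhds (L * (3 - L ^ 2) / 2)) := by
    simp_rw [fun k => hx (k + 1)]
    exact (hlim.mul ((hlim.pow 2).const_sub 3)).div_const 2
  have h3 := tendsto_nhds_unique h1 h2
  have h4 : L * ((L - 1) * (L + 1)) = 0 := by linear_combination 2 * h3
  have h5 : L = 1 := by
    rcases mul_eq_zero.mp h4 with h | h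
    · linarith
    · rcases mul_eq_zero.mp h with h | h <;> linarith
  rw [h5] at hlim
  exact (Filter.tendsto_add_atTop_iff_nat 1).mp hlim
end
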